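/- Let C be a quasiminimal pregeometry class, H, H' ∈ C, let G ⊆ H and G' ⊆ H' be countable closed or empty, let g : G → G' be an isomorphism, and let g ∪ f : H ⇀ H' be a partial embedding with X = dom(f) and X' = img(f) finite. If y ∈ H \ cl(X ∪ G) and y' ∈ H' \ cl(X' ∪ G'), then g ∪ f ∪ {⟨y, y'⟩} is a partial embedding. -/

import Mathlib

open FirstOrder FirstOrder.Language Set Cardinal



universe u u' v w

namespace QM

variable {L : FirstOrder.Language.{v, w}}

/-- Formulas of `L_{ω₁,ω}`: built from atomic formulas by negation, countable
conjunction (indexed by `ℕ`), and universal quantification; `α` is the type of free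
variables and `n` counts the de Bruijn bound variables. Countable disjunctions and
the existential quantifier are definable via negation. -/
inductive InfFormula (L : FirstOrder.Language.{v, w}) (α : Type u) : ℕ → Type (max u v w)
  | falsum {n : ℕ} : InfFormula L α n
  | equal {n : ℕ} (t₁ t₂ : L.Term (α ⊕ (Fin n))) : InfFormula L α n
  | rel {n l : ℕ} (R : L.Relations l) (ts : Fin l → L.Term (α ⊕ (Fin n))) : InfFormula L α n
  | not {n : ℕ} (φ : InfFormula L α n) : InfFormula L α n
  | iInf {n : ℕ} (φ : ℕ → InfFormula L α n) : InfFormula L α n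
  | all {n : ℕ} (φ : InfFormula L α (n + 1)) : InfFormula L α n

/-- Satisfaction of an `L_{ω₁,ω}`-formula in an `L`-structure `M`, given an
assignment `v` of the free variables and `xs` of the bound variables. -/
def InfFormula.Realize {M : Type u'} [L.Structure M] {α : Type u} :
    ∀ {n : ℕ}, InfFormula L α n → (α → M) → (Fin n → M) → Prop
  | _, .falsum, _, _ => False
  | _, .equal t₁ t₂, v, xs => t₁.realize (Sum.elim v xs) = t₂.realize (Sum.elim v xs)
  | _, .rel R ts, v, xs => Structure.RelMap R (fun i => (ts i).realize (Sum.elim v xs))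
  | _, .not φ, v, xs => ¬ φ.Realize v xs
  | _, .iInf φ, v, xs => ∀ i : ℕ, (φ i).Realize v xs
  | _, .all φ, v, xs => ∀ x : M, φ.Realize v (Fin.snoc xs x)

/-- An `L_{ω₁,ω}`-sentence. -/
abbrev InfSentence (L : FirstOrder.Language.{v, w}) := InfFormula L PEmpty 0

/-- Satisfaction of an `L_{ω₁,ω}`-sentence. -/
def InfSentence.RealizeS (M : Type u') [L.Structure M] (φ : InfSentence L) : Prop :=
  InfFormula.Realize (M := M) φ PEmpty.elim (fun i => i.elim0)

/-- Satisfaction of an `L_{ω₁,ω}`-formula with parameters from the set `A`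
and `m` free variables `v̄`, at the tuple `v`. -/
def InfFormula.RealizeP {M : Type u'} [L.Structure M] {A : Set M} {m : ℕ}
    (φ : InfFormula L (↥A ⊕ Fin m) 0) (v : Fin m → M) : Prop :=
  φ.Realize (Sum.elim Subtype.val v) (fun i => i.elim0)

/-- The domain of a partial map, viewed as a graph (set of pairs). -/
def pdom {H : Type*} {H' : Type*} (p : Set (H × H')) : Set H := Prod.fst '' p

/-- The image of a partial map, viewed as a graph (set of pairs). -/
def pimg {H : Type*} {H' : Type*} (p : Set (H × H')) : Set H' := Prod.snd '' p

/-- The image of a set `X` under a partial map given as a graph. -/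
def pimage {H : Type*} {H' : Type*} (p : Set (H × H')) (X : Set H) : Set H' :=
  {b | ∃ a ∈ X, (a, b) ∈ p}

/-- A partial map (given as its graph `p`) is a partial embedding if it preserves
quantifier-free first-order formulas. (This forces `p` to be the graph of an
injective partial function.) -/
def IsPartialEmbedding {H : Type u} {H' : Type u} [L.Structure H] [L.Structure H']
    (p : Set (H × H')) : Prop :=
  ∀ (n : ℕ) (φ : L.Formula (Fin n)), BoundedFormula.IsQF φ →
    ∀ (a : Fin n → H) (b : Fin n → H'), (∀ i, (a i, b i) ∈ p) →
      (φ.Realize a ↔ φ.Realize b)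

/-- A partial map is a σ-embedding if it is a partial embedding and preserves all
`L_{ω₁,ω}`-formulas with (possibly infinitely many) parameters from its domain;
equivalently `⟨M, m⟩_{m ∈ dom p} ≡_{ω₁,ω} ⟨N, p(m)⟩_{m ∈ dom p}`. -/
def IsSigmaEmbedding {H : Type u} {H' : Type u} [L.Structure H] [L.Structure H']
    (p : Set (H × H')) : Prop :=
  IsPartialEmbedding (L := L) p ∧
    ∀ (φ : InfFormula L (↥(pdom p)) 0) (b : ↥(pdom p) → H'),
      (∀ x : ↥(pdom p), ((x : H), b x) ∈ p) →
        (φ.Realize Subtype.val (fun i => i.elim0) ↔ φ.Realize b (fun i => i.elim0))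

/-- A pregeometry (combinatorial geometry) on a set. -/
structure IsPregeometry {α : Type*} (cl : Set α → Set α) : Prop where
  subset_cl : ∀ X, X ⊆ cl X
  mono : ∀ ⦃X Y : Set α⦄, X ⊆ Y → cl X ⊆ cl Y
  idem : ∀ X, cl (cl X) = cl X
  finChar : ∀ (X : Set α) (y : α), y ∈ cl X → ∃ F : Finset α, ↑F ⊆ X ∧ y ∈ cl ↑F
  exchange : ∀ (X : Set α) (a b : α), a ∈ cl (X ∪ {b}) → a ∉ cl X → b ∈ cl (X ∪ {a})

/-- A pair `⟨H, cl_H⟩` of an `L`-structure and a closure operator on it. -/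
structure QMObj (L : FirstOrder.Language.{v, w}) where
  carrier : Type u
  [str : L.Structure carrier]
  cl : Set carrier → Set carrier

attribute [instance] QMObj.str

/-- `G` is countable and closed, or empty. -/
def CCOE (H : QMObj.{u} L) (G : Set H.carrier) : Prop :=
  (G.Countable ∧ H.cl G = G) ∨ G = ∅

/-- The axioms for a class of pairs `⟨H, cl_H⟩` to be a quasiminimal pregeometry class. -/
structure IsQMClass (C : Set (QMObj.{u} L)) : Prop where
  /-- Closure under isomorphisms, transporting the closure operator. -/
  iso_closed : ∀ H ∈ C, ∀ (N : Type u) [_iN : L.Structure N] (f : H.carrier ≃[L] N),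
      (⟨N, fun X => f '' (H.cl (f ⁻¹' X))⟩ : QMObj L) ∈ C
  /-- Any two members satisfy the same quantifier-free sentences. -/
  qf_theory : ∀ H ∈ C, ∀ H' ∈ C, ∀ (φ : L.Sentence), BoundedFormula.IsQF φ →
      (H.carrier ⊨ φ ↔ H'.carrier ⊨ φ)
  /-- Each `cl_H` is a pregeometry. -/
  pregeom : ∀ H ∈ C, IsPregeometry H.cl
  /-- The closure of a finite set is countable. -/
  cl_finite_countable : ∀ H ∈ C, ∀ X : Set H.carrier, X.Finite → (H.cl X).Countable
  /-- The closure of any set is (the underlying set of) a substructure which, with the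
  restricted closure operator, is again a member of the class. -/
  cl_mem : ∀ H ∈ C, ∀ X : Set H.carrier, ∃ S : L.Substructure H.carrier,
      (S : Set H.carrier) = H.cl X ∧
      (⟨↥S, fun Y => Subtype.val ⁻¹' (H.cl (Subtype.val '' Y))⟩ : QMObj L) ∈ C
  /-- Partial embeddings preserve and reflect the closure relation. -/
  cl_embedding : ∀ H ∈ C, ∀ H' ∈ C, ∀ (p : Set (H.carrier × H'.carrier)),
      IsPartialEmbedding (L := L) p → ∀ X ⊆ pdom p, ∀ (y : H.carrier) (y' : H'.carrier),
        (y, y') ∈ p → (y ∈ H.cl X ↔ y' ∈ H'.cl (pimage p X))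
  /-- ℵ₀-homogeneity over countable closed models, part (i): an isomorphism between
  countable closed (or empty) sets extends by any pair of independent points. -/
  homogeneity₁ : ∀ H ∈ C, ∀ H' ∈ C, ∀ (g : Set (H.carrier × H'.carrier)),
      CCOE H (pdom g) → CCOE H' (pimg g) → IsPartialEmbedding (L := L) g →
      ∀ (x : H.carrier) (x' : H'.carrier), x ∉ H.cl (pdom g) → x' ∉ H'.cl (pimg g) →
        IsPartialEmbedding (L := L) (g ∪ {(x, x')})
  /-- ℵ₀-homogeneity over countable closed models, part (ii). -/
  homogeneity₂ : ∀ H ∈ C, ∀ H' ∈ C, ∀ (g f : Set (H.carrier × H'.carrier)),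
      CCOE H (pdom g) → CCOE H' (pimg g) → IsPartialEmbedding (L := L) g →
      (pdom f).Finite → IsPartialEmbedding (L := L) (g ∪ f) →
      ∀ y ∈ H.cl (pdom f ∪ pdom g), ∃ y' : H'.carrier,
        IsPartialEmbedding (L := L) (g ∪ f ∪ {(y, y')})


/-- `p` is a σ-type over `A` in `m` variables: every countable subset of `p` is
consistent with the structure, i.e. simultaneously satisfiable. -/
def IsSigmaType {M : Type u'} [L.Structure M] {A : Set M} {m : ℕ}
    (p : Set (InfFormula L (↥A ⊕ Fin m) 0)) : Prop :=
  ∀ Φ ⊆ p, Φ.Countable → ∃ v : Fin m → M, ∀ φ ∈ Φ, φ.RealizeP v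

/-- A σ-type `p` is isolated if there is a consistent `L_{ω₁,ω}`-formula `ψ(x̄)`
(possibly with parameters from `M`) such that `ψ` implies every formula of `p`. -/
def IsIsolated {M : Type u'} [L.Structure M] {A : Set M} {m : ℕ}
    (p : Set (InfFormula L (↥A ⊕ Fin m) 0)) : Prop :=
  ∃ ψ : InfFormula L (M ⊕ Fin m) 0,
    (∃ v : Fin m → M, ψ.Realize (Sum.elim id v) (fun i => i.elim0)) ∧
    ∀ φ ∈ p, ∀ v : Fin m → M, ψ.Realize (Sum.elim id v) (fun i => i.elim0) → φ.RealizeP v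

/-- A σ-type `p` is realised if some tuple satisfies every formula of `p`. -/
def IsRealized {M : Type u'} [L.Structure M] {A : Set M} {m : ℕ}
    (p : Set (InfFormula L (↥A ⊕ Fin m) 0)) : Prop :=
  ∃ v : Fin m → M, ∀ φ ∈ p, φ.RealizeP v

/-- `B` is an independent subset of the pregeometry `⟨H, cl_H⟩`. -/
def IsIndep (H : QMObj.{u} L) (B : Set H.carrier) : Prop :=
  ∀ x ∈ B, x ∉ H.cl (B \ {x})

/-- `B` is a basis of the pregeometry `⟨H, cl_H⟩`: a maximal independent subset. -/
def IsBasis (H : QMObj.{u} L) (B : Set H.carrier) : Prop :=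
  IsIndep H B ∧ ∀ B' : Set H.carrier, B ⊆ B' → IsIndep H B' → B' = B

/-- The model-theoretic algebraic closure of `X` in `M`: the set of elements
satisfying some first-order formula with parameters in `X` having finitely many
solutions. -/
def aclS (L : FirstOrder.Language.{v, w}) (M : Type u) [L.Structure M] (X : Set M) :
    Set M :=
  {y | ∃ (n : ℕ) (φ : L.BoundedFormula (Fin n) 1) (v : Fin n → M),
    (∀ i, v i ∈ X) ∧ φ.Realize v ![y] ∧ {z : M | φ.Realize v ![z]}.Finite}


/-!
Run a back-and-forth between `A = cl(X ∪ G)` and `A' = cl(X' ∪ G')` starting from `g ∪ f`: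
both sets are countable, each step is an application of ℵ₀-homogeneity (ii) to a finite extension
of `g`, and the new point stays inside the closure because partial embeddings preserve and reflect
`cl`. The union is an isomorphism `A → A'` between countable closed sets, so ℵ₀-homogeneity (i)
extends it by any pair of points outside `A` and `A'`.
-/

section PartialMap

variable {α β : Type*} {p : Set (α × β)}

theorem pdom_union (p q : Set (α × β)) : pdom (p ∪ q) = pdom p ∪ pdom q :=
  image_union _ _ _

theorem pimg_union (p q : Set (α × β)) : pimg (p ∪ q) = pimg p ∪ pimg q :=
  image_union _ _ _

theorem pdom_preimage_swap (p : Set (α × β)) : pdom (Prod.swap ⁻¹' p) = pimg p := by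
  rw [← image_swap_eq_preimage_swap, pdom, image_image, pimg]
  rfl

theorem pimg_preimage_swap (p : Set (α × β)) : pimg (Prod.swap ⁻¹' p) = pdom p := by
  rw [← image_swap_eq_preimage_swap, pimg, image_image, pdom]
  rfl

theorem subset_pdom_prod_pimg (p : Set (α × β)) : p ⊆ pdom p ×ˢ pimg p :=
  subset_fst_image_prod_snd_image

theorem exists_directedOn_of_back_and_forth {S : Set (Set (α × β))} (hp : p ∈ S)
    {A : Set α} {B : Set β} (hA : A.Countable) (hB : B.Countable)
    (forth : ∀ q ∈ S, ∀ a ∈ A, ∃ r ∈ S, q ⊆ r ∧ a ∈ pdom r)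
    (back : ∀ q ∈ S, ∀ b ∈ B, ∃ r ∈ S, q ⊆ r ∧ b ∈ pimg r) :
    ∃ D ⊆ S, p ∈ D ∧ DirectedOn (· ⊆ ·) D ∧ A ⊆ pdom (⋃₀ D) ∧ B ⊆ pimg (⋃₀ D) := by
  let forthCofinal (a : A) : Order.Cofinal S :=
    { carrier := {q | a.1 ∈ pdom q.1}
      isCofinal := fun q ↦
        let ⟨r, hrS, hqr, har⟩ := forth q q.2 a a.2
        ⟨⟨r, hrS⟩, har, hqr⟩ }
  let backCofinal (b : B) : Order.Cofinal S :=
    { carrier := {q | b.1 ∈ pimg q.1}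
      isCofinal := fun q ↦
        let ⟨r, hrS, hqr, hbr⟩ := back q q.2 b b.2
        ⟨⟨r, hrS⟩, hbr, hqr⟩ }
  have := hA.to_subtype
  have := hB.to_subtype
  let _ : Encodable (A ⊕ B) := Encodable.ofCountable _
  let I : Order.Ideal S := Order.idealOfCofinals ⟨p, hp⟩ (Sum.elim forthCofinal backCofinal)
  have meets := Order.cofinal_meets_idealOfCofinals ⟨p, hp⟩ (Sum.elim forthCofinal backCofinal)
  refine ⟨Subtype.val '' (I : Set S), Subtype.coe_image_subset _ _,
    mem_image_of_mem _ (Order.mem_idealOfCofinals _ _),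
    directedOn_image.2 I.directed, fun a ha ↦ ?_, fun b hb ↦ ?_⟩
  · obtain ⟨q, haq, hqI⟩ := meets (.inl ⟨a, ha⟩)
    exact image_mono (subset_sUnion_of_mem (mem_image_of_mem _ hqI)) haq
  · obtain ⟨q, hbq, hqI⟩ := meets (.inr ⟨b, hb⟩)
    exact image_mono (subset_sUnion_of_mem (mem_image_of_mem _ hqI)) hbq

end PartialMap

namespace IsPartialEmbedding

variable {M N : Type u} [L.Structure M] [L.Structure N] {p q : Set (M × N)}

theorem mono (hq : IsPartialEmbedding (L := L) q) (hpq : p ⊆ q) : IsPartialEmbedding (L := L) p :=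
  fun n φ hφ a b hab ↦ hq n φ hφ a b fun i ↦ hpq (hab i)

theorem preimage_swap (hp : IsPartialEmbedding (L := L) p) :
    IsPartialEmbedding (L := L) (Prod.swap ⁻¹' p) :=
  fun n φ hφ a b hab ↦ (hp n φ hφ b a hab).symm

theorem right_unique (hp : IsPartialEmbedding (L := L) p) {a : M} {b c : N}
    (hab : (a, b) ∈ p) (hac : (a, c) ∈ p) : b = c := by
  have h := hp 2 (Term.equal (Term.var 0) (Term.var 1))
    (BoundedFormula.IsAtomic.equal _ _).isQF ![a, a] ![b, c]
    (Fin.forall_fin_two.2 ⟨hab, hac⟩)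
  simpa [Formula.realize_equal] using h

theorem pimage_pdom_of_subset (hq : IsPartialEmbedding (L := L) q) (hpq : p ⊆ q) :
    pimage q (pdom p) = pimg p := by
  ext b
  constructor
  · rintro ⟨_, ⟨⟨a, c⟩, hac, rfl⟩, hab⟩
    exact ⟨(a, c), hac, hq.right_unique (hpq hac) hab⟩
  · rintro ⟨⟨a, b⟩, hab, rfl⟩
    exact ⟨a, ⟨(a, b), hab, rfl⟩, hpq hab⟩

theorem sUnion_of_directedOn {D : Set (Set (M × N))} (hne : D.Nonempty)
    (hdir : DirectedOn (· ⊆ ·) D) (hD : ∀ p ∈ D, IsPartialEmbedding (L := L) p) :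
    IsPartialEmbedding (L := L) (⋃₀ D) := by
  intro n φ hφ a b hab
  obtain ⟨p, hpD, hp⟩ := hdir.exists_mem_subset_of_finite_of_subset_sUnion hne
    (finite_range fun i ↦ (a i, b i)) (range_subset_iff.2 hab)
  exact hD p hpD n φ hφ a b (range_subset_iff.1 hp)

end IsPartialEmbedding

theorem CCOE.countable {H : QMObj.{u} L} {G : Set H.carrier} (hG : CCOE H G) : G.Countable :=
  hG.elim And.left fun hempty ↦ hempty ▸ countable_empty

theorem IsPregeometry.countable_cl {α : Type*} {cl : Set α → Set α} (hcl : IsPregeometry cl)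
    (hfin : ∀ F : Set α, F.Finite → (cl F).Countable) {X : Set α} (hX : X.Countable) :
    (cl X).Countable := by
  refine ((countable_ofPred_finite_subset hX).biUnion fun F hF ↦ hfin F hF.1).mono fun y hy ↦ ?_
  obtain ⟨F, hFX, hyF⟩ := hcl.finChar X y hy
  exact mem_biUnion (x := (F : Set α)) ⟨F.finite_toSet, hFX⟩ hyF

/-- The partial embeddings to which ℵ₀-homogeneity (ii) applies: extensions by finitely many pairs
of an isomorphism `g` between countable closed, or empty, sets. The base `g` is not part of the
data, so that the notion is closed under adding a pair. -/
structure IsFiniteOverClosed {H H' : QMObj.{u} L} (p : Set (H.carrier × H'.carrier)) : Prop where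
  isPartialEmbedding : IsPartialEmbedding (L := L) p
  exists_base : ∃ g ⊆ p, CCOE H (pdom g) ∧ CCOE H' (pimg g) ∧ (p \ g).Finite

namespace IsFiniteOverClosed

variable {H H' : QMObj.{u} L} {p : Set (H.carrier × H'.carrier)}

theorem countable (hp : IsFiniteOverClosed p) : p.Countable := by
  obtain ⟨g, hgp, hG, hG', hfin⟩ := hp.exists_base
  have hg : g.Countable := (hG.countable.prod hG'.countable).mono (subset_pdom_prod_pimg g)
  exact union_sdiff_cancel hgp ▸ hg.union hfin.countable

theorem preimage_swap (hp : IsFiniteOverClosed p) : IsFiniteOverClosed (Prod.swap ⁻¹' p) := by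
  obtain ⟨g, hgp, hG, hG', hfin⟩ := hp.exists_base
  refine ⟨hp.isPartialEmbedding.preimage_swap, Prod.swap ⁻¹' g, preimage_mono hgp, ?_, ?_,
    ?_⟩
  · rwa [pdom_preimage_swap]
  · rwa [pimg_preimage_swap]
  · rw [← preimage_sdiff]
    exact hfin.preimage Prod.swap_injective.injOn

theorem insert_of_isPartialEmbedding (hp : IsFiniteOverClosed p) {z : H.carrier × H'.carrier}
    (hz : IsPartialEmbedding (L := L) (insert z p)) : IsFiniteOverClosed (insert z p) := by
  obtain ⟨g, hgp, hG, hG', hfin⟩ := hp.exists_base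
  exact ⟨hz, g, hgp.trans (subset_insert z p), hG, hG',
    (hfin.insert z).subset insert_sdiff_subset⟩

end IsFiniteOverClosed

/-- The finite approximations to an isomorphism `cl(dom p) → cl(img p)` extending `p`. -/
def backAndForthSystem {H H' : QMObj.{u} L} (p : Set (H.carrier × H'.carrier)) :
    Set (Set (H.carrier × H'.carrier)) :=
  {q | IsFiniteOverClosed q ∧ p ⊆ q ∧ q ⊆ H.cl (pdom p) ×ˢ H'.cl (pimg p)}

namespace IsQMClass

variable {C : Set (QMObj.{u} L)} {H H' : QMObj.{u} L} {p q : Set (H.carrier × H'.carrier)}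

theorem ccoe_cl (hC : IsQMClass C) (hH : H ∈ C) {X : Set H.carrier} (hX : X.Countable) :
    CCOE H (H.cl X) :=
  .inl ⟨(hC.pregeom H hH).countable_cl (hC.cl_finite_countable H hH) hX, (hC.pregeom H hH).idem X⟩

theorem mem_cl_pdom_iff_mem_cl_pimg (hC : IsQMClass C) (hH : H ∈ C) (hH' : H' ∈ C)
    (hq : IsPartialEmbedding (L := L) q) (hpq : p ⊆ q) {y : H.carrier} {y' : H'.carrier}
    (hyy' : (y, y') ∈ q) : y ∈ H.cl (pdom p) ↔ y' ∈ H'.cl (pimg p) := by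
  rw [hC.cl_embedding H hH H' hH' q hq (pdom p) (image_mono hpq) y y' hyy',
    hq.pimage_pdom_of_subset hpq]

theorem exists_insert_of_mem_cl_pdom (hC : IsQMClass C) (hH : H ∈ C) (hH' : H' ∈ C)
    (hp : IsFiniteOverClosed p) {y : H.carrier} (hy : y ∈ H.cl (pdom p)) :
    ∃ y', IsFiniteOverClosed (insert (y, y') p) := by
  obtain ⟨g, hgp, hG, hG', hfin⟩ := hp.exists_base
  have hdom : pdom (p \ g) ∪ pdom g = pdom p := by
    rw [← pdom_union, sdiff_union_of_subset hgp]
  obtain ⟨y', hy'⟩ := hC.homogeneity₂ H hH H' hH' g (p \ g) hG hG'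
    (hp.isPartialEmbedding.mono hgp) (hfin.image _)
    (by rw [union_sdiff_cancel hgp]; exact hp.isPartialEmbedding) y (hdom ▸ hy)
  rw [union_sdiff_cancel hgp, union_singleton] at hy'
  exact ⟨y', hp.insert_of_isPartialEmbedding hy'⟩

theorem exists_insert_of_mem_cl_pimg (hC : IsQMClass C) (hH : H ∈ C) (hH' : H' ∈ C)
    (hp : IsFiniteOverClosed p) {y' : H'.carrier} (hy' : y' ∈ H'.cl (pimg p)) :
    ∃ y, IsFiniteOverClosed (insert (y, y') p) := by
  obtain ⟨y, hy⟩ := hC.exists_insert_of_mem_cl_pdom hH' hH hp.preimage_swap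
    ((pdom_preimage_swap p).symm ▸ hy')
  refine ⟨y, ?_⟩
  convert hy.preimage_swap using 1
  ext ⟨a, b⟩
  simp [and_comm]

theorem insert_mem_backAndForthSystem (hC : IsQMClass C) (hH : H ∈ C) (hH' : H' ∈ C)
    (hq : q ∈ backAndForthSystem p) {y : H.carrier} {y' : H'.carrier}
    (hins : IsFiniteOverClosed (insert (y, y') q))
    (hyy' : y ∈ H.cl (pdom p) ∨ y' ∈ H'.cl (pimg p)) :
    insert (y, y') q ∈ backAndForthSystem p := by
  have hpq : p ⊆ insert (y, y') q := hq.2.1.trans (subset_insert _ _)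
  have hiff : y ∈ H.cl (pdom p) ↔ y' ∈ H'.cl (pimg p) :=
    hC.mem_cl_pdom_iff_mem_cl_pimg hH hH' hins.isPartialEmbedding hpq (mem_insert _ _)
  exact ⟨hins, hpq, insert_subset ⟨hyy'.elim id hiff.2, hyy'.elim hiff.1 id⟩ hq.2.2⟩

theorem exists_extension_cl (hC : IsQMClass C) (hH : H ∈ C) (hH' : H' ∈ C)
    (hp : IsFiniteOverClosed p) :
    ∃ h, p ⊆ h ∧ IsPartialEmbedding (L := L) h ∧
      pdom h = H.cl (pdom p) ∧ pimg h = H'.cl (pimg p) := by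
  have hcl := hC.pregeom H hH
  have hcl' := hC.pregeom H' hH'
  have hpS : p ∈ backAndForthSystem p := ⟨hp, Subset.rfl, (subset_pdom_prod_pimg p).trans
    (prod_mono (hcl.subset_cl _) (hcl'.subset_cl _))⟩
  have forth : ∀ q ∈ backAndForthSystem p, ∀ y ∈ H.cl (pdom p),
      ∃ r ∈ backAndForthSystem p, q ⊆ r ∧ y ∈ pdom r := by
    intro q hq y hy
    obtain ⟨y', hins⟩ := hC.exists_insert_of_mem_cl_pdom hH hH' hq.1
      (hcl.mono (image_mono hq.2.1) hy)
    exact ⟨_, hC.insert_mem_backAndForthSystem hH hH' hq hins (.inl hy), subset_insert _ _,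
      _, mem_insert _ _, rfl⟩
  have back : ∀ q ∈ backAndForthSystem p, ∀ y' ∈ H'.cl (pimg p),
      ∃ r ∈ backAndForthSystem p, q ⊆ r ∧ y' ∈ pimg r := by
    intro q hq y' hy'
    obtain ⟨y, hins⟩ := hC.exists_insert_of_mem_cl_pimg hH hH' hq.1
      (hcl'.mono (image_mono hq.2.1) hy')
    exact ⟨_, hC.insert_mem_backAndForthSystem hH hH' hq hins (.inr hy'), subset_insert _ _,
      _, mem_insert _ _, rfl⟩
  obtain ⟨D, hDS, hpD, hdir, hdom, himg⟩ := exists_directedOn_of_back_and_forth hpS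
    (hC.ccoe_cl hH (hp.countable.image _)).countable
    (hC.ccoe_cl hH' (hp.countable.image _)).countable forth back
  have hsub : ⋃₀ D ⊆ H.cl (pdom p) ×ˢ H'.cl (pimg p) := sUnion_subset fun q hq ↦ (hDS hq).2.2
  exact ⟨⋃₀ D, subset_sUnion_of_mem hpD,
    .sUnion_of_directedOn ⟨p, hpD⟩ hdir fun q hq ↦ (hDS hq).1.isPartialEmbedding,
    (image_subset_iff.2 fun z hz ↦ (hsub hz).1).antisymm hdom,
    (image_subset_iff.2 fun z hz ↦ (hsub hz).2).antisymm himg⟩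

theorem isPartialEmbedding_insert_of_notMem_cl (hC : IsQMClass C) (hH : H ∈ C) (hH' : H' ∈ C)
    (hp : IsFiniteOverClosed p) {y : H.carrier} {y' : H'.carrier} (hy : y ∉ H.cl (pdom p))
    (hy' : y' ∉ H'.cl (pimg p)) : IsPartialEmbedding (L := L) (insert (y, y') p) := by
  obtain ⟨h, hph, hh, hdom, himg⟩ := hC.exists_extension_cl hH hH' hp
  have hext : IsPartialEmbedding (L := L) (h ∪ {(y, y')}) := by
    apply hC.homogeneity₁ H hH H' hH' h _ _ hh
    · rwa [hdom, (hC.pregeom H hH).idem]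
    · rwa [himg, (hC.pregeom H' hH').idem]
    · exact hdom ▸ hC.ccoe_cl hH (hp.countable.image _)
    · exact himg ▸ hC.ccoe_cl hH' (hp.countable.image _)
  rw [union_singleton] at hext
  exact hext.mono (insert_subset_insert hph)

end IsQMClass

/-- Given `H, H' ∈ C`, countable closed or empty `G ⊆ H`, `G' ⊆ H'`, an
isomorphism `g : G → G'` and a partial embedding `g ∪ f` with `X = dom f`, `X' = img f`
finite: if `y ∈ H \ cl(X ∪ G)` and `y' ∈ H' \ cl(X' ∪ G')`, then `g ∪ f ∪ {⟨y, y'⟩}`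
is a partial embedding. -/
theorem statement_2 {L : FirstOrder.Language.{v, w}} (C : Set (QMObj.{u} L))
    (hC : IsQMClass C) (H : QMObj.{u} L) (hH : H ∈ C) (H' : QMObj.{u} L) (hH' : H' ∈ C)
    (g f : Set (H.carrier × H'.carrier))
    (hG : CCOE H (pdom g)) (hG' : CCOE H' (pimg g))
    (hg : IsPartialEmbedding (L := L) g)
    (hgf : IsPartialEmbedding (L := L) (g ∪ f))
    (hXfin : (pdom f).Finite) (hX'fin : (pimg f).Finite)
    (y : H.carrier) (y' : H'.carrier)
    (hy : y ∉ H.cl (pdom f ∪ pdom g)) (hy' : y' ∉ H'.cl (pimg f ∪ pimg g)) :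
    IsPartialEmbedding (L := L) (g ∪ f ∪ {(y, y')}) := by
  have hf : f.Finite := (hXfin.prod hX'fin).subset (subset_pdom_prod_pimg f)
  have hp : IsFiniteOverClosed (g ∪ f) :=
    ⟨hgf, g, subset_union_left, hG, hG', hf.subset (by rw [union_sdiff_left]; exact sdiff_subset)⟩
  have hdom : pdom (g ∪ f) = pdom f ∪ pdom g := by rw [union_comm, pdom_union]
  have himg : pimg (g ∪ f) = pimg f ∪ pimg g := by rw [union_comm, pimg_union]
  rw [union_singleton]
  exact hC.isPartialEmbedding_insert_of_notMem_cl hH hH' hp (hdom ▸ hy) (himg ▸ hy')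

end QM
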